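/- For every r > (d+1)/d there exists a constant C_r < ∞ such that for every nonnegative measurable function f ∈ L^{(d+1)/d}(ℝ^d), ( ∫_0^∞ ( λ · |{x ∈ ℝ^d : Tf(x) > λ}|^{1/(d+1)} )^r dλ/λ )^{1/r} ≤ C_r ‖f‖_{L^{(d+1)/d}}; that is, T maps L^{(d+1)/d}(ℝ^d) boundedly into the Lorentz space L^{d+1, r}(ℝ^d). -/

import Mathlib

open MeasureTheory ENNReal

noncomputable section

/-- `ℝ^{d-1}` -/
abbrev Vec (n : ℕ) : Type := EuclideanSpace ℝ (Fin n)

/-- `ℝ^d = ℝ^{d-1} × ℝ`, a point `x = (x', x_d)` -/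
abbrev Pt (n : ℕ) : Type := Vec n × ℝ

/-- The Radon-like transform `Tf(x) = ∫_{ℝ^{d-1}} f(x' - t, x_d - |t|²) dt`. -/
def radonT (n : ℕ) (f : Pt n → ℝ≥0∞) (x : Pt n) : ℝ≥0∞ :=
  ∫⁻ t : Vec n, f (x.1 - t, x.2 - ‖t‖ ^ 2)

/-- The `L^p` norm `(∫ f^p)^{1/p}` of a nonnegative function. -/
def LpN (n : ℕ) (p : ℝ) (f : Pt n → ℝ≥0∞) : ℝ≥0∞ :=
  (∫⁻ x, f x ^ p) ^ (1 / p)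

/-!
Put `n = d - 1`. The shear `(y, z) ↦ (y, z - |y|²)` straightens the paraboloids, so that `T`
becomes the transform `R` integrating over the hyperplanes `z = b + a ⬝ᵥ y`; the endpoint
`R : L^{(n+2)/(n+1)} → L^{n+2,(n+2)/(n+1)}` suffices since Lorentz spaces increase in the second
exponent. Given `u ≤ R f` with level sets `E_s = {u > s}`, pair `u` with the superposition
`W = ∫ |E_s|^{-n/(n+1)} 1_{E_s} s^{-n/(n+1)} ds`: the integral `∫ u W` dominates the Lorentz
integral of `u`, and by duality (`R` is essentially self-adjoint) and Hölder's inequality it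
remains to bound `∫ (R W)^{n+2}` by that same Lorentz integral. Expanding the power and ordering
the parameters reduces this to `∫ R 1_G (R 1_H)^{n+1} ≤ C |G| |H|^n`, hence, moving the first `R`
to the other factor, to a bound for the integrals of `1_H` over the hyperplanes through a fixed
point. In polar coordinates about that point this is the `L^{(n+1)/n} → L^{n+1}` bound for `R` in
one dimension less, so induction on `n` closes the argument.
-/

section Inequalities

theorem lintegral_Ioc_rpow_sub_one {a t : ℝ} (ha : 0 < a) (ht : 0 ≤ t) :
    ∫⁻ s in Set.Ioc 0 t, ENNReal.ofReal s ^ (a - 1) =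
      ENNReal.ofReal t ^ a / ENNReal.ofReal a := by
  have integrable : IntegrableOn (fun s : ℝ => s ^ (a - 1)) (Set.Ioc 0 t) :=
    (intervalIntegral.intervalIntegrable_rpow' (by linarith)).1
  calc ∫⁻ s in Set.Ioc 0 t, ENNReal.ofReal s ^ (a - 1)
      = ∫⁻ s in Set.Ioc 0 t, ENNReal.ofReal (s ^ (a - 1)) :=
        setLIntegral_congr_fun measurableSet_Ioc fun s hs => ofReal_rpow_of_pos hs.1
    _ = ENNReal.ofReal (t ^ a / a) := by
        rw [← ofReal_integral_eq_lintegral_ofReal integrable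
          (ae_restrict_of_forall_mem measurableSet_Ioc fun s hs => Real.rpow_nonneg hs.1.le _),
          ← intervalIntegral.integral_of_le ht, integral_rpow (.inl (by linarith)),
          sub_add_cancel, Real.zero_rpow ha.ne', sub_zero]
    _ = _ := by rw [ofReal_div_of_pos ha, ofReal_rpow_of_nonneg ht ha.le]

theorem le_rpow_mul_of_le_rpow_mul_mul_rpow {p q : ℝ} (hpq : p.HolderConjugate q) {a K T : ℝ≥0∞}
    (hT : T ≠ ∞) (h : T ≤ a ^ (1 / p) * (K * T) ^ (1 / q)) : T ≤ K ^ (p / q) * a := by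
  rcases eq_or_ne T 0 with rfl | hT0
  · exact zero_le
  have hp : 0 < p := hpq.pos
  have hq : 0 < 1 / q := one_div_pos.2 hpq.symm.pos
  have cancelled : T ^ (1 / p) ≤ a ^ (1 / p) * K ^ (1 / q) := by
    refine (ENNReal.mul_le_mul_iff_left (c := T ^ (1 / q)) (by simp [hT0, hT])
      (rpow_ne_top_of_nonneg hq.le hT)).1 ?_
    calc T ^ (1 / p) * T ^ (1 / q) = T := by
          rw [← rpow_add _ _ hT0 hT, one_div, one_div, hpq.inv_add_inv_eq_one, rpow_one]
      _ ≤ _ := h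
      _ = _ := by rw [mul_rpow_of_nonneg _ _ hq.le, mul_assoc]
  calc T = (T ^ (1 / p)) ^ p := by rw [← rpow_mul, one_div_mul_cancel hp.ne', rpow_one]
    _ ≤ (a ^ (1 / p) * K ^ (1 / q)) ^ p := by gcongr
    _ = K ^ (p / q) * a := by
      rw [mul_rpow_of_nonneg _ _ hp.le, ← rpow_mul, ← rpow_mul, one_div_mul_cancel hp.ne',
        rpow_one, mul_comm, one_div_mul_eq_div]

theorem lintegral_pow_succ_le_measure_univ_pow_mul {α : Type*} [MeasurableSpace α] {μ : Measure α}
    {X : α → ℝ≥0∞} (hX : AEMeasurable X μ) (N : ℕ) :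
    (∫⁻ a, X a ∂μ) ^ (N + 1) ≤ μ Set.univ ^ N * ∫⁻ a, X a ^ (N + 1) ∂μ := by
  have hN : (0 : ℝ) < N + 1 := by positivity
  have jensen := eLpNorm'_le_eLpNorm'_mul_rpow_measure_univ (p := 1) (q := (N : ℝ) + 1) (μ := μ)
    one_pos (by simp) hX.aestronglyMeasurable
  simp only [eLpNorm'_eq_lintegral_enorm, enorm_eq_self, rpow_one, div_one] at jensen
  calc (∫⁻ a, X a ∂μ) ^ (N + 1)
      ≤ ((∫⁻ a, X a ^ ((N : ℝ) + 1) ∂μ) ^ (1 / ((N : ℝ) + 1)) *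
          μ Set.univ ^ (1 - 1 / ((N : ℝ) + 1))) ^ (N + 1) := by gcongr
    _ = μ Set.univ ^ N * ∫⁻ a, X a ^ (N + 1) ∂μ := by
      rw [mul_pow, mul_comm, ← rpow_mul_natCast, ← rpow_mul_natCast, ← rpow_natCast _ N]
      congr 1
      · congr 1; push_cast; field_simp; ring
      · push_cast
        rw [one_div_mul_cancel hN.ne', rpow_one]
        exact lintegral_congr fun a => by rw [← rpow_natCast]; push_cast; rfl

end Inequalities

section OrderedParameter

variable {ι : Type*} [LinearOrder ι] [TopologicalSpace ι] [OrderClosedTopology ι]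
  [MeasurableSpace ι] [BorelSpace ι] {ν : Measure ι}

theorem measurable_measure_Iic (ν : Measure ι) : Measurable fun s => ν (Set.Iic s) :=
  Monotone.measurable fun _ _ hst => measure_mono (Set.Iic_subset_Iic.2 hst)

variable [SecondCountableTopology ι] [SFinite ν]

theorem lintegral_pow_succ_le_lintegral_mul_Iic {h : ι → ℝ≥0∞} (hh : Measurable h) (N : ℕ) :
    (∫⁻ s, h s ∂ν) ^ (N + 1) ≤ 2 ^ N * ∫⁻ s, h s * (∫⁻ t in Set.Iic s, h t ∂ν) ^ N ∂ν := by
  set H : ι → ℝ≥0∞ := fun s => ∫⁻ t in Set.Iic s, h t ∂ν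
  have H_mono : Monotone H := fun s t hst => lintegral_mono_set (Set.Iic_subset_Iic.2 hst)
  have H_meas : Measurable H := H_mono.measurable
  induction N with
  | zero => simp
  | succ N ih =>
    set K : ι → ι → ℝ≥0∞ := fun s t => (Set.Iic s).indicator h t * (h s * H s ^ N)
    have K_meas : Measurable (Function.uncurry K) := by
      have : Measurable fun p : ι × ι => (Set.Iic p.1).indicator h p.2 :=
        (hh.comp measurable_snd).indicator (measurableSet_le measurable_snd measurable_fst)
      exact this.mul (by fun_prop)
    have K_meas_left : Measurable fun s => ∫⁻ t, K s t ∂ν := K_meas.lintegral_prod_right'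
    have lintegral_K (s : ι) : ∫⁻ t, K s t ∂ν = h s * H s ^ (N + 1) := by
      rw [lintegral_mul_const _ (hh.indicator measurableSet_Iic),
        lintegral_indicator measurableSet_Iic]
      ring
    have le_K (s t : ι) : h t * (h s * H s ^ N) ≤ K s t + K t s := by
      rcases le_total t s with hts | hst
      · simp only [K, Set.indicator_of_mem (Set.mem_Iic.2 hts), le_self_add]
      · calc h t * (h s * H s ^ N) ≤ h t * (h s * H t ^ N) := by gcongr; exact H_mono hst
          _ = K t s := by simp only [K, Set.indicator_of_mem (Set.mem_Iic.2 hst)]; ring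
          _ ≤ _ := le_add_self
    calc (∫⁻ s, h s ∂ν) ^ (N + 1 + 1)
        ≤ (∫⁻ t, h t ∂ν) * (2 ^ N * ∫⁻ s, h s * H s ^ N ∂ν) := by rw [pow_succ']; gcongr
      _ = 2 ^ N * ∫⁻ s, ∫⁻ t, h t * (h s * H s ^ N) ∂ν ∂ν := by
          simp only [lintegral_mul_const _ hh]
          rw [lintegral_const_mul _ (by fun_prop)]
          ring
      _ ≤ 2 ^ N * ∫⁻ s, ∫⁻ t, K s t + K t s ∂ν ∂ν := by
          gcongr with s t; exact le_K s t
      _ = 2 ^ N * (∫⁻ s, ∫⁻ t, K s t ∂ν ∂ν + ∫⁻ s, ∫⁻ t, K t s ∂ν ∂ν) := by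
          simp only [lintegral_add_left K_meas.of_uncurry_left]
          rw [lintegral_add_left K_meas_left]
      _ = 2 ^ N * (∫⁻ s, ∫⁻ t, K s t ∂ν ∂ν + ∫⁻ s, ∫⁻ t, K s t ∂ν ∂ν) := by
          rw [lintegral_lintegral_swap (f := fun s t => K t s)
            (K_meas.comp measurable_swap).aemeasurable]
      _ = 2 ^ (N + 1) * ∫⁻ s, h s * H s ^ (N + 1) ∂ν := by simp only [lintegral_K]; ring

theorem lintegral_pow_add_two_le {h : ι → ℝ≥0∞} (hh : Measurable h) (N : ℕ) :
    (∫⁻ s, h s ∂ν) ^ (N + 2) ≤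
      2 ^ (N + 1) * ∫⁻ s, ν (Set.Iic s) ^ N * ∫⁻ t in Set.Iic s, h s * h t ^ (N + 1) ∂ν ∂ν := by
  refine (lintegral_pow_succ_le_lintegral_mul_Iic hh (N + 1)).trans ?_
  gcongr 2 ^ (N + 1) * ?_
  refine lintegral_mono fun s => ?_
  calc h s * (∫⁻ t in Set.Iic s, h t ∂ν) ^ (N + 1)
      ≤ h s * (ν (Set.Iic s) ^ N * ∫⁻ t in Set.Iic s, h t ^ (N + 1) ∂ν) := by
        gcongr
        simpa using lintegral_pow_succ_le_measure_univ_pow_mul (μ := ν.restrict (Set.Iic s))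
          hh.aemeasurable N
    _ = _ := by rw [lintegral_const_mul _ (hh.pow_const _)]; ring

theorem measurable_lintegral_Iic {α : Type*} [MeasurableSpace α] {k : ι × α → ι → ℝ≥0∞}
    (hk : Measurable (Function.uncurry k)) :
    Measurable fun z : ι × α => ∫⁻ t in Set.Iic z.1, k z t ∂ν := by
  simp only [← lintegral_indicator measurableSet_Iic]
  exact (Measurable.indicator (s := {z : (ι × α) × ι | z.2 ≤ z.1.1}) hk
    (measurableSet_le (by fun_prop) (by fun_prop))).lintegral_prod_right'

theorem lintegral_lintegral_pow_add_two_le {α : Type*} [MeasurableSpace α] {μ : Measure α}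
    [SFinite μ] {h : ι × α → ℝ≥0∞} (hh : Measurable h) (N : ℕ) :
    ∫⁻ x, (∫⁻ s, h (s, x) ∂ν) ^ (N + 2) ∂μ ≤
      2 ^ (N + 1) * ∫⁻ s, ν (Set.Iic s) ^ N *
        ∫⁻ t in Set.Iic s, ∫⁻ x, h (s, x) * h (t, x) ^ (N + 1) ∂μ ∂ν ∂ν := by
  have inner_meas : Measurable fun z : ι × α =>
      ∫⁻ t in Set.Iic z.1, h z * h (t, z.2) ^ (N + 1) ∂ν :=
    measurable_lintegral_Iic (k := fun z t => h z * h (t, z.2) ^ (N + 1)) (by fun_prop)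
  calc ∫⁻ x, (∫⁻ s, h (s, x) ∂ν) ^ (N + 2) ∂μ
      ≤ ∫⁻ x, 2 ^ (N + 1) * ∫⁻ s, ν (Set.Iic s) ^ N *
          ∫⁻ t in Set.Iic s, h (s, x) * h (t, x) ^ (N + 1) ∂ν ∂ν ∂μ :=
        lintegral_mono fun x => lintegral_pow_add_two_le (by fun_prop) N
    _ = 2 ^ (N + 1) * ∫⁻ s, ∫⁻ x, ν (Set.Iic s) ^ N *
          ∫⁻ t in Set.Iic s, h (s, x) * h (t, x) ^ (N + 1) ∂ν ∂μ ∂ν := by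
        rw [lintegral_const_mul' _ _ (by finiteness), lintegral_lintegral_swap]
        exact ((((measurable_measure_Iic ν).comp measurable_snd).pow_const N).mul
          (inner_meas.comp measurable_swap)).aemeasurable
    _ = _ := by
        congr 1
        refine lintegral_congr fun s => ?_
        have inner_meas_s : Measurable fun x =>
            ∫⁻ t in Set.Iic s, h (s, x) * h (t, x) ^ (N + 1) ∂ν :=
          inner_meas.comp measurable_prodMk_left
        rw [lintegral_const_mul _ inner_meas_s, lintegral_lintegral_swap (by fun_prop)]

end OrderedParameter

section Lorentz

variable {α : Type*} [MeasurableSpace α] {μ : Measure α} {g : α → ℝ≥0∞} {p q r : ℝ}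

/-- The `r`-th power `∫_0^∞ (λ μ{g > λ}^{1/q})^r dλ/λ` of the Lorentz quasinorm of `g` in
`L^{q,r}(μ)`. -/
def lorentzLIntegral (q r : ℝ) (g : α → ℝ≥0∞) (μ : Measure α) : ℝ≥0∞ :=
  ∫⁻ l in Set.Ioi (0 : ℝ),
    (ENNReal.ofReal l * μ {x | ENNReal.ofReal l < g x} ^ ((1 : ℝ) / q)) ^ r / ENNReal.ofReal l

theorem antitone_measure_ofReal_lt (g : α → ℝ≥0∞) (μ : Measure α) :
    Antitone fun l : ℝ => μ {x | ENNReal.ofReal l < g x} := fun _ _ hlm =>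
  measure_mono fun _ hx => (ENNReal.ofReal_le_ofReal hlm).trans_lt hx

theorem measurable_lorentzIntegrand (q r : ℝ) (g : α → ℝ≥0∞) (μ : Measure α) :
    Measurable fun l : ℝ =>
      (ENNReal.ofReal l * μ {x | ENNReal.ofReal l < g x} ^ ((1 : ℝ) / q)) ^ r /
        ENNReal.ofReal l :=
  have := (antitone_measure_ofReal_lt g μ).measurable
  (((by fun_prop : Measurable fun l : ℝ => ENNReal.ofReal l).mul
    (this.pow_const _)).pow_const r).div (by fun_prop)

theorem lorentzLIntegral_mono_measure_lt {β : Type*} [MeasurableSpace β] {μ' : Measure β}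
    {g' : β → ℝ≥0∞} (hq : 0 < q) (hr : 0 ≤ r)
    (h : ∀ l, μ {x | l < g x} ≤ μ' {x | l < g' x}) :
    lorentzLIntegral q r g μ ≤ lorentzLIntegral q r g' μ' := by
  unfold lorentzLIntegral
  gcongr
  exact h _

theorem ofReal_mul_rpow_div_ofReal {l : ℝ} (hl : 0 < l) (hr : 0 ≤ r) (V : ℝ≥0∞) :
    (ENNReal.ofReal l * V) ^ r / ENNReal.ofReal l = ENNReal.ofReal l ^ (r - 1) * V ^ r := by
  rw [mul_rpow_of_nonneg _ _ hr, rpow_sub _ _ (by simpa using hl) (by simp), rpow_one,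
    div_eq_mul_inv, div_eq_mul_inv]
  ring

theorem rpow_le_ofReal_mul_lorentzLIntegral (hq : 0 < q) (hp : 0 < p) {l : ℝ} (hl : 0 < l) :
    (ENNReal.ofReal l * μ {x | ENNReal.ofReal l < g x} ^ ((1 : ℝ) / q)) ^ p ≤
      ENNReal.ofReal p * lorentzLIntegral q p g μ := by
  set D : ℝ → ℝ≥0∞ := fun l => μ {x | ENNReal.ofReal l < g x} ^ ((1 : ℝ) / q)
  have D_anti : Antitone D := fun s t hst =>
    rpow_le_rpow (antitone_measure_ofReal_lt g μ hst) (by positivity)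
  calc (ENNReal.ofReal l * D l) ^ p
      = ENNReal.ofReal p * ((ENNReal.ofReal l ^ p / ENNReal.ofReal p) * D l ^ p) := by
        rw [mul_rpow_of_nonneg _ _ hp.le, ← mul_assoc,
          ENNReal.mul_div_cancel (by simpa using hp) (by simp)]
    _ = ENNReal.ofReal p * ∫⁻ s in Set.Ioc 0 l, ENNReal.ofReal s ^ (p - 1) * D l ^ p := by
        rw [lintegral_mul_const _ (by fun_prop), lintegral_Ioc_rpow_sub_one hp hl.le]
    _ ≤ ENNReal.ofReal p * ∫⁻ s in Set.Ioc 0 l,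
          (ENNReal.ofReal s * D s) ^ p / ENNReal.ofReal s := by
        gcongr ENNReal.ofReal p * ?_
        refine setLIntegral_mono' measurableSet_Ioc fun s hs => ?_
        rw [ofReal_mul_rpow_div_ofReal hs.1 hp.le]
        gcongr
        exact D_anti hs.2
    _ ≤ _ := by
        gcongr ENNReal.ofReal p * ?_
        exact lintegral_mono_set Set.Ioc_subset_Ioi_self

theorem lorentzLIntegral_le_of_exponent_le (hq : 0 < q) (hp : 0 < p) (hpr : p ≤ r) :
    lorentzLIntegral q r g μ ≤
      ENNReal.ofReal p ^ (r / p - 1) * lorentzLIntegral q p g μ ^ (r / p) := by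
  have hrp : 0 ≤ r / p - 1 := sub_nonneg.2 ((one_le_div hp).2 hpr)
  set L := lorentzLIntegral q p g μ
  set φ : ℝ → ℝ≥0∞ := fun l =>
    ENNReal.ofReal l * μ {x | ENNReal.ofReal l < g x} ^ ((1 : ℝ) / q)
  have φ_rpow_le {l : ℝ} (hl : 0 < l) :
      φ l ^ r ≤ (ENNReal.ofReal p * L) ^ (r / p - 1) * φ l ^ p :=
    calc φ l ^ r = (φ l ^ p) ^ (r / p - 1) * φ l ^ p := by
          rw [← rpow_mul, ← rpow_add_of_nonneg _ _ (by positivity) hp.le]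
          congr 1; field_simp; ring
      _ ≤ _ := by gcongr; exact rpow_le_ofReal_mul_lorentzLIntegral hq hp hl
  calc lorentzLIntegral q r g μ
      ≤ ∫⁻ l in Set.Ioi 0, (ENNReal.ofReal p * L) ^ (r / p - 1) *
          (φ l ^ p / ENNReal.ofReal l) := by
        refine setLIntegral_mono' measurableSet_Ioi fun l hl => ?_
        rw [← mul_div_assoc]
        gcongr
        exact φ_rpow_le hl
    _ = (ENNReal.ofReal p * L) ^ (r / p - 1) * L :=
        lintegral_const_mul _ (measurable_lorentzIntegrand q p g μ)
    _ = _ := by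
        rw [mul_rpow_of_nonneg _ _ hrp, mul_assoc]
        congr 1
        conv_lhs => rw [← rpow_one L, ← rpow_mul, one_mul, ← rpow_add_of_nonneg _ _ hrp zero_le_one]
        rw [sub_add_cancel]

theorem rpow_le_ofReal_mul_lintegral_indicator (hq : 0 < q) (y : ℝ≥0∞) :
    y ^ q ≤ ENNReal.ofReal q * ∫⁻ l in Set.Ioi (0 : ℝ),
      {l : ℝ | ENNReal.ofReal l < y}.indicator (fun l => ENNReal.ofReal l ^ (q - 1)) l := by
  refine (le_rpow_inv_iff hq).1 (le_of_forall_lt_imp_le_of_dense fun c hc => ?_)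
  refine (le_rpow_inv_iff hq).2 ?_
  lift c to NNReal using hc.ne_top
  calc (c : ℝ≥0∞) ^ q
      = ENNReal.ofReal q * ∫⁻ l in Set.Ioc 0 (c : ℝ), ENNReal.ofReal l ^ (q - 1) := by
        rw [lintegral_Ioc_rpow_sub_one hq c.coe_nonneg, ofReal_coe_nnreal,
          ENNReal.mul_div_cancel (by simpa using hq) (by simp)]
    _ ≤ _ := by
        rw [setLIntegral_indicator (measurableSet_lt (by fun_prop) (by fun_prop))]
        gcongr
        intro l hl
        refine ⟨lt_of_le_of_lt ?_ hc, hl.1⟩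
        simpa using ENNReal.ofReal_le_ofReal hl.2

theorem lintegral_rpow_le_lorentzLIntegral [SFinite μ] (hq : 0 < q) (hg : Measurable g) :
    ∫⁻ x, g x ^ q ∂μ ≤ ENNReal.ofReal q * lorentzLIntegral q q g μ := by
  set J : α → ℝ → ℝ≥0∞ := fun x =>
    {l : ℝ | ENNReal.ofReal l < g x}.indicator fun l => ENNReal.ofReal l ^ (q - 1)
  have J_meas : Measurable (Function.uncurry J) :=
    Measurable.indicator (f := fun z : α × ℝ => ENNReal.ofReal z.2 ^ (q - 1))
      (s := {z : α × ℝ | ENNReal.ofReal z.2 < g z.1}) (by fun_prop)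
      (measurableSet_lt (by fun_prop) (by fun_prop))
  have lintegral_J (l : ℝ) : ∫⁻ x, J x l ∂μ =
      ENNReal.ofReal l ^ (q - 1) * μ {x | ENNReal.ofReal l < g x} :=
    lintegral_indicator_const (measurableSet_lt measurable_const hg) _
  calc ∫⁻ x, g x ^ q ∂μ
      ≤ ∫⁻ x, ENNReal.ofReal q * (∫⁻ l in Set.Ioi 0, J x l) ∂μ :=
        lintegral_mono fun x => rpow_le_ofReal_mul_lintegral_indicator hq _
    _ = ENNReal.ofReal q * ∫⁻ l in Set.Ioi 0, ∫⁻ x, J x l ∂μ := by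
        have J_meas_left : Measurable fun x => ∫⁻ l in Set.Ioi 0, J x l :=
          J_meas.lintegral_prod_right'
        rw [lintegral_const_mul _ J_meas_left, lintegral_lintegral_swap J_meas.aemeasurable]
    _ = ENNReal.ofReal q * lorentzLIntegral q q g μ := by
        congr 1
        refine setLIntegral_congr_fun measurableSet_Ioi fun l hl => ?_
        rw [lintegral_J, ofReal_mul_rpow_div_ofReal hl hq.le, ← rpow_mul,
          one_div_mul_cancel hq.ne', rpow_one]

theorem lorentzLIntegral_iSup_le (hq : 0 < q) (hr : 0 ≤ r) {v : ℕ → α → ℝ≥0∞} (hv : Monotone v)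
    {B : ℝ≥0∞} (hB : ∀ n, lorentzLIntegral q r (v n) μ ≤ B) :
    lorentzLIntegral q r (⨆ n, v n) μ ≤ B := by
  have D_tendsto (l : ℝ) : Filter.Tendsto (fun n => μ {x | ENNReal.ofReal l < v n x}) Filter.atTop
      (nhds (μ {x | ENNReal.ofReal l < (⨆ n, v n) x})) := by
    have mono : Monotone fun n => {x | ENNReal.ofReal l < v n x} := fun m n hmn x hx =>
      hx.trans_le (hv hmn x)
    have union : {x | ENNReal.ofReal l < (⨆ n, v n) x} = ⋃ n, {x | ENNReal.ofReal l < v n x} := by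
      ext x
      simp only [iSup_apply, lt_iSup_iff, Set.mem_ofPred_eq, Set.mem_iUnion]
    rw [union]
    exact tendsto_measure_iUnion_atTop mono
  refine le_of_tendsto' (lintegral_tendsto_of_tendsto_of_monotone
    (fun n => ?_) ?_ ?_) hB
  · exact (measurable_lorentzIntegrand q r (v n) μ).aemeasurable
  · refine ae_of_all _ fun l m n hmn => ?_
    simp only
    gcongr
    exact hv hmn _
  · refine ae_restrict_of_forall_mem measurableSet_Ioi fun l (hl : 0 < l) => ?_
    refine ENNReal.Tendsto.div_const (Filter.Tendsto.ennrpow_const _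
      (ENNReal.Tendsto.const_mul ((D_tendsto l).ennrpow_const _) ?_)) ?_
    · exact .inr ofReal_ne_top
    · exact .inr (by simpa using hl)

theorem lorentzLIntegral_ne_top_of_le_of_support_subset (hq : 0 < q) (hr : 0 < r) {N : ℕ}
    (hgN : ∀ x, g x ≤ N) {S : Set α} (hgS : Function.support g ⊆ S) (hS : μ S ≠ ∞) :
    lorentzLIntegral q r g μ ≠ ∞ := by
  have D_le (l : ℝ) : μ {x | ENNReal.ofReal l < g x} ≤ μ S :=
    measure_mono fun x hx => hgS (ne_bot_of_gt hx)
  have D_eq_zero {l : ℝ} (hl : l ∉ Set.Iic (N : ℝ)) : μ {x | ENNReal.ofReal l < g x} = 0 := by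
    have : (N : ℝ≥0∞) ≤ ENNReal.ofReal l := by
      simpa using ENNReal.ofReal_le_ofReal (not_le.1 hl).le
    simp [((hgN _).trans this).not_gt]
  refine ne_top_of_le_ne_top (b := (ENNReal.ofReal N ^ r / ENNReal.ofReal r) *
    (μ S ^ ((1 : ℝ) / q)) ^ r) ?_ ?_
  · have : ENNReal.ofReal r ≠ 0 := by simpa using hr
    finiteness
  rw [← lintegral_Ioc_rpow_sub_one hr N.cast_nonneg, ← lintegral_mul_const _ (by fun_prop),
    ← Set.Ioi_inter_Iic, Set.inter_comm, ← setLIntegral_indicator measurableSet_Iic]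
  refine setLIntegral_mono' measurableSet_Ioi fun l hl => ?_
  rw [ofReal_mul_rpow_div_ofReal hl hr.le]
  by_cases hlN : l ∈ Set.Iic (N : ℝ)
  · rw [Set.indicator_of_mem hlN]
    gcongr _ * (?_ ^ _) ^ _
    exact D_le l
  · rw [D_eq_zero hlN, zero_rpow_of_pos (by positivity), zero_rpow_of_pos hr, mul_zero]
    exact zero_le

theorem lorentzLIntegral_le_of_forall_le [SigmaFinite μ] (hq : 0 < q) (hr : 0 < r)
    (hg : Measurable g) {B : ℝ≥0∞}
    (hB : ∀ u, Measurable u → u ≤ g → μ (Function.support u) ≠ ∞ →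
      lorentzLIntegral q r u μ ≠ ∞ → lorentzLIntegral q r u μ ≤ B) :
    lorentzLIntegral q r g μ ≤ B := by
  set v : ℕ → α → ℝ≥0∞ := fun n => (spanningSets μ n).indicator fun x => min (g x) n
  have v_mono : Monotone v := fun m n hmn => by
    refine (Set.indicator_le_indicator_of_subset (monotone_spanningSets μ hmn)
      fun _ => zero_le).trans (Set.indicator_mono fun x => ?_)
    gcongr
  have v_le (n : ℕ) : v n ≤ g := Set.indicator_le fun x _ => min_le_left _ _
  have v_le_nat (n : ℕ) : ∀ x, v n x ≤ n := Set.indicator_le fun x _ => min_le_right _ _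
  have supp_v (n : ℕ) : Function.support (v n) ⊆ spanningSets μ n := Set.support_indicator_subset
  have spanning_ne_top (n : ℕ) : μ (spanningSets μ n) ≠ ∞ := (measure_spanningSets_lt_top μ n).ne
  have iSup_v : ⨆ n, v n = g := by
    refine le_antisymm (iSup_le v_le) fun x => le_of_forall_lt fun c hc => ?_
    obtain ⟨m, hm⟩ := ENNReal.exists_nat_gt hc.ne_top
    set n := max m (spanningSetsIndex μ x)
    have hx : x ∈ spanningSets μ n := mem_spanningSets_of_index_le μ x (le_max_right _ _)
    rw [iSup_apply]
    calc c < min (g x) n := lt_min hc (hm.trans_le (by exact_mod_cast le_max_left _ _))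
      _ = v n x := by simp only [v, Set.indicator_of_mem hx]
      _ ≤ ⨆ i, v i x := le_iSup (fun i => v i x) n
  rw [← iSup_v]
  exact lorentzLIntegral_iSup_le hq hr.le v_mono fun n =>
    hB _ ((hg.min measurable_const).indicator (measurableSet_spanningSets μ n)) (v_le n)
      (ne_top_of_le_ne_top (spanning_ne_top n) (measure_mono (supp_v n)))
      (lorentzLIntegral_ne_top_of_le_of_support_subset hq hr (v_le_nat n) (supp_v n)
        (spanning_ne_top n))

end Lorentz

section HyperplaneIntegral

variable {n : ℕ} {f g : (Fin n → ℝ) × ℝ → ℝ≥0∞}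

instance isAddHaarMeasure_volume_pi_prod :
    (volume : Measure ((Fin n → ℝ) × ℝ)).IsAddHaarMeasure :=
  inferInstanceAs (Measure.prod volume volume).IsAddHaarMeasure

@[fun_prop]
theorem measurable_dotProduct_comp {α : Type*} [MeasurableSpace α] {u v : α → Fin n → ℝ}
    (hu : Measurable u) (hv : Measurable v) : Measurable fun x => u x ⬝ᵥ v x := by
  unfold dotProduct
  fun_prop

/-- The integral of `f` over the graph `{(y, b + a ⬝ᵥ y)}` of an affine function, i.e. over a
non-vertical hyperplane, as a function of its slope and intercept `(a, b)`. -/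
def hyperplaneIntegral (f : (Fin n → ℝ) × ℝ → ℝ≥0∞) (x : (Fin n → ℝ) × ℝ) : ℝ≥0∞ :=
  ∫⁻ y, f (y, x.2 + x.1 ⬝ᵥ y)

@[fun_prop]
theorem measurable_hyperplaneIntegral (hf : Measurable f) : Measurable (hyperplaneIntegral f) := by
  unfold hyperplaneIntegral
  fun_prop

theorem hyperplaneIntegral_lintegral {ι : Type*} [MeasurableSpace ι] {ν : Measure ι} [SFinite ν]
    {K : ι → (Fin n → ℝ) × ℝ → ℝ≥0∞} (hK : Measurable (Function.uncurry K))
    (x : (Fin n → ℝ) × ℝ) :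
    hyperplaneIntegral (fun y => ∫⁻ s, K s y ∂ν) x = ∫⁻ s, hyperplaneIntegral (K s) x ∂ν :=
  lintegral_lintegral_swap (f := fun y s => K s (y, x.2 + x.1 ⬝ᵥ y))
    (hK.comp (g := Function.uncurry K)
      (f := fun z : (Fin n → ℝ) × ι => (z.2, z.1, x.2 + x.1 ⬝ᵥ z.1)) (by fun_prop)).aemeasurable

theorem hyperplaneIntegral_translate (g : (Fin n → ℝ) × ℝ → ℝ≥0∞) (a y : Fin n → ℝ) (z : ℝ) :
    hyperplaneIntegral g (a, z + -y ⬝ᵥ a) =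
      hyperplaneIntegral (fun x => g (x + (y, z))) (a, 0) := by
  unfold hyperplaneIntegral
  rw [← lintegral_add_right_eq_self _ y]
  refine lintegral_congr fun w => ?_
  simp only [Prod.mk_add_mk, dotProduct_add, neg_dotProduct, dotProduct_comm y a]
  ring_nf

theorem lintegral_hyperplaneIntegral_mul (hf : Measurable f) (hg : Measurable g) :
    ∫⁻ x, hyperplaneIntegral f x * g x = ∫⁻ y, f y * hyperplaneIntegral g (-y.1, y.2) := by
  calc ∫⁻ x, hyperplaneIntegral f x * g x
      = ∫⁻ x : (Fin n → ℝ) × ℝ, ∫⁻ y, f (y, x.2 + x.1 ⬝ᵥ y) * g x :=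
        lintegral_congr fun x => (lintegral_mul_const _ (by fun_prop)).symm
    _ = ∫⁻ a : Fin n → ℝ, ∫⁻ b : ℝ, ∫⁻ y, f (y, b + a ⬝ᵥ y) * g (a, b) := by
        rw [Measure.volume_eq_prod, lintegral_prod _ (by fun_prop)]
    _ = ∫⁻ a : Fin n → ℝ, ∫⁻ y, ∫⁻ b : ℝ, f (y, b + a ⬝ᵥ y) * g (a, b) := by
        refine lintegral_congr fun a => lintegral_lintegral_swap (by fun_prop)
    _ = ∫⁻ a : Fin n → ℝ, ∫⁻ y, ∫⁻ z : ℝ, f (y, z) * g (a, z + -y ⬝ᵥ a) := by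
        refine lintegral_congr fun a => lintegral_congr fun y => ?_
        rw [← lintegral_add_right_eq_self (fun z => f (y, z) * g (a, z + -y ⬝ᵥ a)) (a ⬝ᵥ y)]
        simp only [neg_dotProduct, dotProduct_comm y a, add_neg_cancel_right]
    _ = ∫⁻ a : Fin n → ℝ, ∫⁻ y : (Fin n → ℝ) × ℝ, f y * g (a, y.2 + -y.1 ⬝ᵥ a) := by
        refine lintegral_congr fun a => ?_
        rw [Measure.volume_eq_prod, lintegral_prod _ (by fun_prop)]
    _ = ∫⁻ y : (Fin n → ℝ) × ℝ, ∫⁻ a : Fin n → ℝ, f y * g (a, y.2 + -y.1 ⬝ᵥ a) :=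
        lintegral_lintegral_swap (by fun_prop)
    _ = _ := lintegral_congr fun y => lintegral_const_mul _ (by fun_prop)

theorem lintegral_hyperplaneIntegral_neg_fst_rpow (hg : Measurable g) (q : ℝ) :
    ∫⁻ y : (Fin n → ℝ) × ℝ, hyperplaneIntegral g (-y.1, y.2) ^ q =
      ∫⁻ y, hyperplaneIntegral g y ^ q :=
  have reflection : MeasurePreserving (Prod.map Neg.neg id : (Fin n → ℝ) × ℝ → (Fin n → ℝ) × ℝ) :=
    (Measure.measurePreserving_neg volume).prod (MeasurePreserving.id volume)
  reflection.lintegral_comp ((measurable_hyperplaneIntegral hg).pow_const q)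

end HyperplaneIntegral

section PencilBound

variable {n : ℕ} {C : ℝ≥0∞}

/-- The restricted `L^{(n+1)/n} → L^{n+1}` bound, with constant `C`, for integrals over the pencil
of non-vertical hyperplanes through the origin. -/
def PencilBound (n : ℕ) (C : ℝ≥0∞) : Prop :=
  ∀ G : Set ((Fin n → ℝ) × ℝ), MeasurableSet G →
    ∫⁻ a, hyperplaneIntegral (G.indicator 1) (a, 0) ^ (n + 1) ≤ C * volume G ^ n

theorem pencilBound_zero : PencilBound 0 1 := fun G _ => by
  rw [Measure.volume_pi_eq_dirac 0, lintegral_dirac, hyperplaneIntegral,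
    Measure.volume_pi_eq_dirac 0, lintegral_dirac]
  simpa using Set.indicator_le_self' (f := (1 : (Fin 0 → ℝ) × ℝ → ℝ≥0∞)) (fun _ _ => zero_le) _

theorem PencilBound.lintegral_hyperplaneIntegral_mul_pow_le (hC : PencilBound n C)
    {f : (Fin n → ℝ) × ℝ → ℝ≥0∞} (hf : Measurable f) {G : Set ((Fin n → ℝ) × ℝ)}
    (hG : MeasurableSet G) :
    ∫⁻ x, hyperplaneIntegral f x * hyperplaneIntegral (G.indicator 1) x ^ (n + 1) ≤
      C * (∫⁻ y, f y) * volume G ^ n := by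
  have : Measurable (G.indicator (1 : (Fin n → ℝ) × ℝ → ℝ≥0∞)) := measurable_one.indicator hG
  have pencil_at (y : (Fin n → ℝ) × ℝ) :
      hyperplaneIntegral (fun x => hyperplaneIntegral (G.indicator 1) x ^ (n + 1)) (-y.1, y.2) ≤
        C * volume G ^ n :=
    calc _ = ∫⁻ a, hyperplaneIntegral (((· + y) ⁻¹' G).indicator 1) (a, 0) ^ (n + 1) :=
          lintegral_congr fun a =>
            congrArg (· ^ (n + 1)) (hyperplaneIntegral_translate (G.indicator 1) a y.1 y.2)
      _ ≤ C * volume ((· + y) ⁻¹' G) ^ n := hC _ (measurable_add_const y hG)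
      _ = C * volume G ^ n := by rw [measure_preimage_add_right]
  calc _ = ∫⁻ y, f y * hyperplaneIntegral
        (fun x => hyperplaneIntegral (G.indicator 1) x ^ (n + 1)) (-y.1, y.2) :=
        lintegral_hyperplaneIntegral_mul hf (by fun_prop)
    _ ≤ ∫⁻ y, f y * (C * volume G ^ n) := by
        gcongr with y; exact pencil_at y
    _ = _ := by rw [lintegral_mul_const _ hf]; ring

end PencilBound

section Superposition

variable {n : ℕ} {C : ℝ≥0∞}

theorem rpow_neg_mul_self {a : ℝ≥0∞} (ha : a ≠ ∞) (n : ℕ) :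
    a ^ (-(n / (n + 1)) : ℝ) * a = a ^ (1 / (n + 1) : ℝ) := by
  have exponent : (-(n / (n + 1)) : ℝ) + 1 = 1 / (n + 1) := by field_simp; ring
  rcases eq_or_ne a 0 with rfl | ha0
  · rw [mul_zero, zero_rpow_of_pos (by positivity)]
  · conv_lhs => rw [← rpow_one a, ← rpow_mul, one_mul, ← rpow_add _ _ ha0 ha, exponent]

theorem rpow_neg_mul_self_le (a : ℝ≥0∞) (n : ℕ) :
    a ^ (-(n / (n + 1)) : ℝ) * a ≤ a ^ (1 / (n + 1) : ℝ) := by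
  rcases eq_or_ne a ∞ with rfl | ha
  · rw [top_rpow_of_pos (show (0 : ℝ) < 1 / (n + 1) by positivity)]
    exact le_top
  · exact (rpow_neg_mul_self ha n).le

theorem rpow_neg_pow_succ_mul_pow_le_one (a : ℝ≥0∞) (n : ℕ) :
    (a ^ (-(n / (n + 1)) : ℝ)) ^ (n + 1) * a ^ n ≤ 1 := by
  have : (a ^ (-(n / (n + 1)) : ℝ)) ^ (n + 1) = (a ^ n)⁻¹ := by
    rw [← rpow_mul_natCast, ← rpow_natCast a n, ← rpow_neg]
    congr 1; push_cast; field_simp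
  rw [this]
  exact ENNReal.inv_mul_le_one _

theorem PencilBound.lintegral_normalized_mul_normalized_pow_le (hC : PencilBound n C)
    {G H : Set ((Fin n → ℝ) × ℝ)} (hG : MeasurableSet G) (hH : MeasurableSet H) :
    ∫⁻ x, volume G ^ (-(n / (n + 1)) : ℝ) * hyperplaneIntegral (G.indicator 1) x *
        (volume H ^ (-(n / (n + 1)) : ℝ) * hyperplaneIntegral (H.indicator 1) x) ^ (n + 1) ≤
      C * volume G ^ (1 / (n + 1) : ℝ) := by
  set w : Set ((Fin n → ℝ) × ℝ) → ℝ≥0∞ := fun G => volume G ^ (-(n / (n + 1)) : ℝ)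
  set R : Set ((Fin n → ℝ) × ℝ) → (Fin n → ℝ) × ℝ → ℝ≥0∞ := fun G =>
    hyperplaneIntegral (G.indicator 1)
  have G_meas : Measurable (R G) := measurable_hyperplaneIntegral (measurable_one.indicator hG)
  have H_meas : Measurable (R H) := measurable_hyperplaneIntegral (measurable_one.indicator hH)
  calc ∫⁻ x, w G * R G x * (w H * R H x) ^ (n + 1)
      = w G * w H ^ (n + 1) * ∫⁻ x, R G x * R H x ^ (n + 1) := by
        rw [← lintegral_const_mul _ (by fun_prop)]
        exact lintegral_congr fun x => by ring
    _ ≤ w G * w H ^ (n + 1) * (C * volume G * volume H ^ n) := by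
        gcongr
        simpa only [lintegral_indicator_one hG] using
          hC.lintegral_hyperplaneIntegral_mul_pow_le (measurable_one.indicator hG) hH
    _ = C * (w G * volume G) * (w H ^ (n + 1) * volume H ^ n) := by ring
    _ ≤ C * volume G ^ (1 / (n + 1) : ℝ) * 1 := by
        gcongr
        · exact rpow_neg_mul_self_le _ n
        · exact rpow_neg_pow_succ_mul_pow_le_one _ n
    _ = _ := mul_one _

variable {ι : Type*} [MeasurableSpace ι] {ν : Measure ι} {E : ι → Set ((Fin n → ℝ) × ℝ)}

/-- The superposition `∫ |E_s|^{-n/(n+1)} 1_{E_s} dν(s)` of indicators, normalized to unit size in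
`L^{(n+1)/n}`. -/
def normalizedSuperposition (ν : Measure ι) (E : ι → Set ((Fin n → ℝ) × ℝ))
    (x : (Fin n → ℝ) × ℝ) : ℝ≥0∞ :=
  ∫⁻ s, volume (E s) ^ (-(n / (n + 1)) : ℝ) * (E s).indicator 1 x ∂ν

theorem measurable_hyperplaneIntegral_indicator
    (hE : MeasurableSet {z : ι × (Fin n → ℝ) × ℝ | z.2 ∈ E z.1}) :
    Measurable fun z : ι × (Fin n → ℝ) × ℝ => hyperplaneIntegral ((E z.1).indicator 1) z.2 :=
  Measurable.lintegral_prod_right' (f := fun w : (ι × (Fin n → ℝ) × ℝ) × (Fin n → ℝ) =>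
    (E w.1.1).indicator (1 : (Fin n → ℝ) × ℝ → ℝ≥0∞) (w.2, w.1.2.2 + w.1.2.1 ⬝ᵥ w.2))
    ((measurable_one.indicator hE).comp
      (f := fun w : (ι × (Fin n → ℝ) × ℝ) × (Fin n → ℝ) =>
        (w.1.1, w.2, w.1.2.2 + w.1.2.1 ⬝ᵥ w.2)) (by fun_prop))

theorem measurable_rpow_volume_mul_indicator
    (hE : MeasurableSet {z : ι × (Fin n → ℝ) × ℝ | z.2 ∈ E z.1}) (c : ℝ) :
    Measurable fun z : ι × (Fin n → ℝ) × ℝ => volume (E z.1) ^ c * (E z.1).indicator 1 z.2 :=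
  have volume_meas : Measurable fun s => volume (E s) := measurable_measure_prodMk_left hE
  ((volume_meas.comp measurable_fst).pow_const c).mul (measurable_one.indicator hE)

theorem measurable_normalizedSuperposition [SFinite ν]
    (hE : MeasurableSet {z : ι × (Fin n → ℝ) × ℝ | z.2 ∈ E z.1}) :
    Measurable (normalizedSuperposition ν E) :=
  (measurable_rpow_volume_mul_indicator hE _).lintegral_prod_left'

theorem hyperplaneIntegral_normalizedSuperposition [SFinite ν]
    (hE : MeasurableSet {z : ι × (Fin n → ℝ) × ℝ | z.2 ∈ E z.1}) (x : (Fin n → ℝ) × ℝ) :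
    hyperplaneIntegral (normalizedSuperposition ν E) x =
      ∫⁻ s, volume (E s) ^ (-(n / (n + 1)) : ℝ) * hyperplaneIntegral ((E s).indicator 1) x ∂ν := by
  unfold normalizedSuperposition
  rw [hyperplaneIntegral_lintegral (measurable_rpow_volume_mul_indicator hE _)]
  refine lintegral_congr fun s => lintegral_const_mul _ ?_
  have E_meas : MeasurableSet (E s) := hE.preimage measurable_prodMk_left
  exact (measurable_one.indicator E_meas).comp
    (f := fun y : Fin n → ℝ => (y, x.2 + x.1 ⬝ᵥ y)) (by fun_prop)

theorem PencilBound.lintegral_hyperplaneIntegral_normalizedSuperposition_pow_le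
    {ι : Type*} [LinearOrder ι] [TopologicalSpace ι] [OrderClosedTopology ι]
    [SecondCountableTopology ι] [MeasurableSpace ι] [BorelSpace ι] {ν : Measure ι} [SFinite ν]
    {E : ι → Set ((Fin n → ℝ) × ℝ)} (hC : PencilBound n C)
    (hE : MeasurableSet {z : ι × (Fin n → ℝ) × ℝ | z.2 ∈ E z.1}) :
    ∫⁻ x, hyperplaneIntegral (normalizedSuperposition ν E) x ^ (n + 2) ≤
      2 ^ (n + 1) * C * ∫⁻ s, ν (Set.Iic s) ^ (n + 1) * volume (E s) ^ (1 / (n + 1) : ℝ) ∂ν := by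
  set R : ι × (Fin n → ℝ) × ℝ → ℝ≥0∞ := fun z => hyperplaneIntegral ((E z.1).indicator 1) z.2
  set w : ι → ℝ≥0∞ := fun s => volume (E s) ^ (-(n / (n + 1)) : ℝ)
  have R_meas : Measurable R := measurable_hyperplaneIntegral_indicator hE
  have w_meas : Measurable w := (measurable_measure_prodMk_left hE).pow_const _
  have E_meas (s : ι) : MeasurableSet (E s) := hE.preimage measurable_prodMk_left
  calc ∫⁻ x, hyperplaneIntegral (normalizedSuperposition ν E) x ^ (n + 2)
      = ∫⁻ x, (∫⁻ s, w s * R (s, x) ∂ν) ^ (n + 2) :=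
        lintegral_congr fun x => by rw [hyperplaneIntegral_normalizedSuperposition hE]
    _ ≤ 2 ^ (n + 1) * ∫⁻ s, ν (Set.Iic s) ^ n *
          ∫⁻ t in Set.Iic s, (∫⁻ x, w s * R (s, x) * (w t * R (t, x)) ^ (n + 1)) ∂ν ∂ν :=
        lintegral_lintegral_pow_add_two_le (h := fun z => w z.1 * R z) (by fun_prop) n
    _ ≤ 2 ^ (n + 1) * ∫⁻ s, ν (Set.Iic s) ^ n *
          ∫⁻ _ in Set.Iic s, C * volume (E s) ^ (1 / (n + 1) : ℝ) ∂ν ∂ν := by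
        gcongr 2 ^ (n + 1) * ?_
        refine lintegral_mono fun s => ?_
        gcongr _ * ?_
        exact lintegral_mono fun t =>
          hC.lintegral_normalized_mul_normalized_pow_le (E_meas s) (E_meas t)
    _ = 2 ^ (n + 1) * ∫⁻ s, C *
          (ν (Set.Iic s) ^ (n + 1) * volume (E s) ^ (1 / (n + 1) : ℝ)) ∂ν := by
        congr 1
        refine lintegral_congr fun s => ?_
        rw [setLIntegral_const]
        ring
    _ = _ := by
        rw [lintegral_const_mul, mul_assoc]
        exact ((measurable_measure_Iic ν).pow_const _).mul
          ((measurable_measure_prodMk_left hE).pow_const _)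

end Superposition

section Endpoint

variable {n : ℕ} {C : ℝ≥0∞}

/-- The measure `s^{-n/(n+1)} ds` on `(0, ∞)`. -/
def levelMeasure (n : ℕ) : Measure ℝ :=
  (volume.restrict (Set.Ioi 0)).withDensity fun s => ENNReal.ofReal s ^ (-(n / (n + 1)) : ℝ)

instance : SFinite (levelMeasure n) := by
  unfold levelMeasure
  infer_instance

theorem lintegral_levelMeasure {h : ℝ → ℝ≥0∞} (hh : Measurable h) :
    ∫⁻ s, h s ∂levelMeasure n =
      ∫⁻ s in Set.Ioi 0, ENNReal.ofReal s ^ (-(n / (n + 1)) : ℝ) * h s :=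
  lintegral_withDensity_eq_lintegral_mul _ (by fun_prop) hh

theorem levelMeasure_Iic_pow (n : ℕ) (s : ℝ) :
    levelMeasure n (Set.Iic s) ^ (n + 1) = (n + 1) ^ (n + 1) * ENNReal.ofReal s := by
  rw [levelMeasure, withDensity_apply _ measurableSet_Iic, Measure.restrict_restrict
    measurableSet_Iic, Set.inter_comm, Set.Ioi_inter_Iic]
  rcases le_total s 0 with hs | hs
  · simp [Set.Ioc_eq_empty_of_le hs, ofReal_of_nonpos hs]
  have exponent : (-(n / (n + 1)) : ℝ) = 1 / (n + 1) - 1 := by field_simp; ring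
  have ofReal_inv : (ENNReal.ofReal (1 / (n + 1)))⁻¹ = n + 1 := by
    rw [← ofReal_inv_of_pos (by positivity), one_div, inv_inv]
    exact_mod_cast ofReal_natCast (n + 1)
  rw [exponent, lintegral_Ioc_rpow_sub_one (by positivity) hs, div_eq_mul_inv, ofReal_inv, mul_pow,
    ← rpow_mul_natCast, mul_comm]
  congr 1
  push_cast
  rw [one_div_mul_cancel (by positivity), rpow_one]

theorem lorentzLIntegral_eq_lintegral_levelMeasure {α : Type*} [MeasurableSpace α] {μ : Measure α}
    (n : ℕ) (u : α → ℝ≥0∞) :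
    lorentzLIntegral (n + 2) ((n + 2) / (n + 1)) u μ =
      ∫⁻ s, ENNReal.ofReal s * μ {x | ENNReal.ofReal s < u x} ^ (1 / (n + 1) : ℝ)
        ∂levelMeasure n := by
  have level_meas : Measurable fun s : ℝ => μ {x | ENNReal.ofReal s < u x} :=
    (antitone_measure_ofReal_lt u μ).measurable
  have level_term_meas : Measurable fun s : ℝ =>
      ENNReal.ofReal s * μ {x | ENNReal.ofReal s < u x} ^ (1 / (n + 1) : ℝ) :=
    measurable_ofReal.mul (level_meas.pow_const _)
  rw [lintegral_levelMeasure level_term_meas]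
  refine setLIntegral_congr_fun measurableSet_Ioi fun s (hs : 0 < s) => ?_
  have ofReal_exponent : ((n + 2) / (n + 1) - 1 : ℝ) = -(n / (n + 1)) + 1 := by field_simp; ring
  have measure_exponent : (1 / (n + 2) * ((n + 2) / (n + 1)) : ℝ) = 1 / (n + 1) := by field_simp
  rw [ofReal_mul_rpow_div_ofReal hs (by positivity), ← rpow_mul, ofReal_exponent,
    measure_exponent, rpow_add _ _ (by simpa using hs) (by simp), rpow_one, mul_assoc]

theorem measurableSet_ofReal_lt {α : Type*} [MeasurableSpace α] {u : α → ℝ≥0∞}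
    (hu : Measurable u) : MeasurableSet {z : ℝ × α | z.2 ∈ {x | ENNReal.ofReal z.1 < u x}} :=
  measurableSet_lt (measurable_ofReal.comp measurable_fst) (hu.comp measurable_snd)

theorem lorentzLIntegral_le_lintegral_mul_normalizedSuperposition {u : (Fin n → ℝ) × ℝ → ℝ≥0∞}
    (hu : Measurable u) (hsupp : volume (Function.support u) ≠ ∞) :
    lorentzLIntegral (n + 2) ((n + 2) / (n + 1)) u volume ≤
      ∫⁻ x, u x * normalizedSuperposition (levelMeasure n)
        (fun s => {x | ENNReal.ofReal s < u x}) x := by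
  set E : ℝ → Set ((Fin n → ℝ) × ℝ) := fun s => {x | ENNReal.ofReal s < u x}
  have hE : MeasurableSet {z : ℝ × (Fin n → ℝ) × ℝ | z.2 ∈ E z.1} :=
    measurableSet_ofReal_lt hu
  have weighted_meas := measurable_rpow_volume_mul_indicator hE (-(n / (n + 1)))
  have E_meas (s : ℝ) : MeasurableSet (E s) := hE.preimage measurable_prodMk_left
  have volume_E_ne_top (s : ℝ) : volume (E s) ≠ ∞ :=
    ne_top_of_le_ne_top hsupp (measure_mono fun x hx => ne_bot_of_gt hx)
  have level_le (s : ℝ) : ENNReal.ofReal s * volume (E s) ^ (1 / (n + 1) : ℝ) ≤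
      ∫⁻ x, u x * (volume (E s) ^ (-(n / (n + 1)) : ℝ) * (E s).indicator 1 x) :=
    calc _ = ∫⁻ x, (E s).indicator (fun _ =>
            ENNReal.ofReal s * volume (E s) ^ (-(n / (n + 1)) : ℝ)) x := by
          rw [lintegral_indicator_const (E_meas s), mul_assoc,
            rpow_neg_mul_self (volume_E_ne_top s)]
      _ ≤ _ := by
          refine lintegral_mono (Set.indicator_le fun x hx => ?_)
          rw [Set.indicator_of_mem hx, Pi.one_apply, mul_one]
          gcongr
          exact le_of_lt hx
  calc _ = ∫⁻ s, ENNReal.ofReal s * volume (E s) ^ (1 / (n + 1) : ℝ) ∂levelMeasure n :=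
        lorentzLIntegral_eq_lintegral_levelMeasure n u
    _ ≤ ∫⁻ s, (∫⁻ x, u x * (volume (E s) ^ (-(n / (n + 1)) : ℝ) * (E s).indicator 1 x))
          ∂levelMeasure n := lintegral_mono level_le
    _ = ∫⁻ x, (∫⁻ s, u x * (volume (E s) ^ (-(n / (n + 1)) : ℝ) * (E s).indicator 1 x)
          ∂levelMeasure n) :=
        lintegral_lintegral_swap
          ((hu.comp measurable_snd).mul weighted_meas).aemeasurable
    _ = _ := lintegral_congr fun x =>
        lintegral_const_mul _ (weighted_meas.comp measurable_prodMk_right)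

theorem PencilBound.lintegral_hyperplaneIntegral_levelSuperposition_pow_le (hC : PencilBound n C)
    {u : (Fin n → ℝ) × ℝ → ℝ≥0∞} (hu : Measurable u) :
    ∫⁻ x, hyperplaneIntegral (normalizedSuperposition (levelMeasure n)
        (fun s => {x | ENNReal.ofReal s < u x})) x ^ (n + 2) ≤
      2 ^ (n + 1) * C * (n + 1) ^ (n + 1) *
        lorentzLIntegral (n + 2) ((n + 2) / (n + 1)) u volume := by
  refine (hC.lintegral_hyperplaneIntegral_normalizedSuperposition_pow_le
    (measurableSet_ofReal_lt hu)).trans_eq ?_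
  rw [lorentzLIntegral_eq_lintegral_levelMeasure, mul_assoc _ ((_ + _) ^ _)]
  simp only [levelMeasure_Iic_pow, mul_assoc]
  rw [lintegral_const_mul' _ _ (by finiteness)]

theorem PencilBound.lorentzLIntegral_le_of_le_hyperplaneIntegral (hC : PencilBound n C)
    {f u : (Fin n → ℝ) × ℝ → ℝ≥0∞} (hf : Measurable f) (hu : Measurable u)
    (huf : u ≤ hyperplaneIntegral f) (hsupp : volume (Function.support u) ≠ ∞)
    (hfin : lorentzLIntegral (n + 2) ((n + 2) / (n + 1)) u volume ≠ ∞) :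
    lorentzLIntegral (n + 2) ((n + 2) / (n + 1)) u volume ≤
      (2 ^ (n + 1) * C * (n + 1) ^ (n + 1)) ^ (1 / (n + 1) : ℝ) *
        ∫⁻ x, f x ^ ((n + 2) / (n + 1) : ℝ) := by
  set p : ℝ := (n + 2) / (n + 1) with p_def
  have hpq : p.HolderConjugate (n + 2) := by
    rw [Real.holderConjugate_iff, p_def]
    exact ⟨by rw [lt_div_iff₀ (by positivity)]; linarith, by field_simp; ring⟩
  set W := normalizedSuperposition (levelMeasure n) fun s => {x | ENNReal.ofReal s < u x}
  have W_meas : Measurable W :=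
    measurable_normalizedSuperposition (measurableSet_ofReal_lt hu)
  have RW_meas : Measurable fun y : (Fin n → ℝ) × ℝ => hyperplaneIntegral W (-y.1, y.2) :=
    (measurable_hyperplaneIntegral W_meas).comp (by fun_prop)
  have duality : lorentzLIntegral (n + 2) p u volume ≤ (∫⁻ x, f x ^ p) ^ (1 / p) *
      (2 ^ (n + 1) * C * (n + 1) ^ (n + 1) * lorentzLIntegral (n + 2) p u volume) ^
        (1 / (n + 2) : ℝ) :=
    calc _ ≤ ∫⁻ x, u x * W x := lorentzLIntegral_le_lintegral_mul_normalizedSuperposition hu hsupp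
      _ ≤ ∫⁻ x, hyperplaneIntegral f x * W x := by gcongr with x; exact huf x
      _ = ∫⁻ y, f y * hyperplaneIntegral W (-y.1, y.2) := lintegral_hyperplaneIntegral_mul hf W_meas
      _ ≤ (∫⁻ x, f x ^ p) ^ (1 / p) *
          (∫⁻ y : (Fin n → ℝ) × ℝ, hyperplaneIntegral W (-y.1, y.2) ^ (n + 2 : ℝ)) ^
            (1 / (n + 2) : ℝ) :=
        ENNReal.lintegral_mul_le_Lp_mul_Lq _ hpq hf.aemeasurable RW_meas.aemeasurable
      _ ≤ _ := by
        rw [lintegral_hyperplaneIntegral_neg_fst_rpow W_meas]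
        gcongr
        have RW_le : ∫⁻ x, hyperplaneIntegral W x ^ (n + 2) ≤
            2 ^ (n + 1) * C * (n + 1) ^ (n + 1) * lorentzLIntegral (n + 2) p u volume :=
          hC.lintegral_hyperplaneIntegral_levelSuperposition_pow_le hu
        exact_mod_cast RW_le
  convert le_rpow_mul_of_le_rpow_mul_mul_rpow hpq hfin duality using 3
  rw [p_def]; field_simp

theorem PencilBound.lorentzLIntegral_hyperplaneIntegral_le (hC : PencilBound n C)
    {f : (Fin n → ℝ) × ℝ → ℝ≥0∞} (hf : Measurable f) :
    lorentzLIntegral (n + 2) ((n + 2) / (n + 1)) (hyperplaneIntegral f) volume ≤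
      (2 ^ (n + 1) * C * (n + 1) ^ (n + 1)) ^ (1 / (n + 1) : ℝ) *
        ∫⁻ x, f x ^ ((n + 2) / (n + 1) : ℝ) :=
  lorentzLIntegral_le_of_forall_le (by positivity) (by positivity) (by fun_prop)
    fun _ hu => hC.lorentzLIntegral_le_of_le_hyperplaneIntegral hf hu

end Endpoint

section RadialIntegral

theorem rpow_le_mul_of_forall_le_add_div {X Y : ℝ≥0∞} (k : ℕ)
    (h : ∀ t : ℝ≥0∞, t ≠ 0 → t ≠ ∞ → X ≤ 2 * t ^ (k + 1) + Y / t) :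
    X ^ ((k + 2) / (k + 1) : ℝ) ≤ 8 * Y := by
  obtain ⟨x, rfl⟩ : ∃ x, X = 4 * x := ⟨X / 4, (ENNReal.mul_div_cancel (by simp) (by simp)).symm⟩
  rcases eq_or_ne x ∞ with rfl | x_ne_top
  · have Y_top : Y = ∞ := by simpa [mul_top] using h 1 one_ne_zero one_ne_top
    simp [Y_top]
  rcases eq_or_ne x 0 with rfl | x_ne_zero
  · rw [mul_zero, zero_rpow_of_pos (by positivity)]
    exact zero_le
  set t : ℝ≥0∞ := x ^ (1 / (k + 1) : ℝ) with t_def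
  have t_ne_zero : t ≠ 0 := (rpow_pos (pos_iff_ne_zero.2 x_ne_zero) x_ne_top).ne'
  have t_ne_top : t ≠ ∞ := rpow_ne_top_of_nonneg (by positivity) x_ne_top
  have t_pow : t ^ (k + 1) = x := by
    rw [t_def, ← rpow_mul_natCast]
    push_cast
    rw [one_div_mul_cancel (by positivity), rpow_one]
  have two_mul_le : 2 * x ≤ Y / t := by
    refine (ENNReal.add_le_add_iff_left (a := 2 * x) (by finiteness)).1 ?_
    calc 2 * x + 2 * x = 4 * x := by ring
      _ ≤ 2 * x + Y / t := t_pow ▸ h t t_ne_zero t_ne_top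
  have exponent : ((k + 2) / (k + 1) : ℝ) = 1 + 1 / (k + 1) := by field_simp; ring
  have exponent_le : ((k + 2) / (k + 1) : ℝ) ≤ (2 : ℕ) := by
    rw [div_le_iff₀ (by positivity)]; push_cast; linarith
  calc (4 * x) ^ ((k + 2) / (k + 1) : ℝ) = 4 ^ ((k + 2) / (k + 1) : ℝ) * (x * t) := by
        rw [mul_rpow_of_nonneg _ _ (by positivity), t_def]
        congr 1
        rw [exponent, rpow_add _ _ x_ne_zero x_ne_top, rpow_one]
    _ ≤ 4 ^ 2 * (x * t) := by
        gcongr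
        exact (rpow_le_rpow_of_exponent_le (by norm_num) exponent_le).trans_eq (rpow_natCast _ _)
    _ = 8 * (2 * x * t) := by ring
    _ ≤ 8 * Y := by gcongr; exact ENNReal.mul_le_of_le_div two_mul_le

theorem lintegral_enorm_pow_mul_rpow_le {A : ℝ → ℝ≥0∞} (hA : Measurable A) (hA1 : A ≤ 1) (k : ℕ) :
    (∫⁻ s, ‖s‖ₑ ^ k * A s) ^ ((k + 2) / (k + 1) : ℝ) ≤ 8 * ∫⁻ s, ‖s‖ₑ ^ (k + 1) * A s := by
  refine rpow_le_mul_of_forall_le_add_div k fun t t_ne_zero t_ne_top => ?_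
  have pointwise (s : ℝ) : ‖s‖ₑ ^ k * A s ≤
      (Metric.closedEBall 0 t).indicator (fun _ => t ^ k) s + t⁻¹ * (‖s‖ₑ ^ (k + 1) * A s) := by
    rcases le_total ‖s‖ₑ t with near | far
    · rw [Set.indicator_of_mem (by simpa using near)]
      calc ‖s‖ₑ ^ k * A s ≤ t ^ k * 1 := by gcongr; exact hA1 s
        _ ≤ _ := by rw [mul_one]; exact le_self_add
    · calc ‖s‖ₑ ^ k * A s = 1 * (‖s‖ₑ ^ k * A s) := (one_mul _).symm
        _ ≤ t⁻¹ * ‖s‖ₑ * (‖s‖ₑ ^ k * A s) := by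
          gcongr
          rwa [← ENNReal.div_eq_inv_mul, ENNReal.le_div_iff_mul_le (.inl t_ne_zero) (.inl t_ne_top),
            one_mul]
        _ = t⁻¹ * (‖s‖ₑ ^ (k + 1) * A s) := by ring
        _ ≤ _ := le_add_self
  calc ∫⁻ s, ‖s‖ₑ ^ k * A s
      ≤ ∫⁻ s : ℝ, ((Metric.closedEBall 0 t).indicator (fun _ => t ^ k) s +
          t⁻¹ * (‖s‖ₑ ^ (k + 1) * A s)) := lintegral_mono pointwise
    _ = t ^ k * (2 * t) + t⁻¹ * ∫⁻ s, ‖s‖ₑ ^ (k + 1) * A s := by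
        rw [lintegral_add_right _ (by fun_prop), lintegral_const_mul _ (by fun_prop),
          lintegral_indicator_const Metric.isClosed_closedEBall.measurableSet,
          Real.volume_closedEBall]
    _ = _ := by rw [ENNReal.div_eq_inv_mul]; ring

theorem lintegral_eq_enorm_pow_finrank_mul {E : Type*} [NormedAddCommGroup E] [NormedSpace ℝ E]
    [MeasurableSpace E] [BorelSpace E] [FiniteDimensional ℝ E] (μ : Measure E)
    [μ.IsAddHaarMeasure] (f : E → ℝ≥0∞) {c : ℝ} (hc : c ≠ 0) :
    ∫⁻ x, f x ∂μ = ‖c‖ₑ ^ Module.finrank ℝ E * ∫⁻ x, f (c • x) ∂μ := by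
  have map_smul : ∫⁻ x, f (c • x) ∂μ = ∫⁻ x, f x ∂(μ.map (c • ·)) :=
    (lintegral_map_equiv f (Homeomorph.smulOfNeZero c hc).toMeasurableEquiv).symm
  have jacobian : ‖c‖ₑ ^ Module.finrank ℝ E *
      ENNReal.ofReal |(c ^ Module.finrank ℝ E)⁻¹| = 1 := by
    rw [← Real.enorm_eq_ofReal_abs, enorm_inv (by positivity), enorm_pow]
    exact ENNReal.mul_inv_cancel (by simp [hc]) (by finiteness)
  rw [map_smul, Measure.map_addHaar_smul μ hc, lintegral_smul_measure, smul_eq_mul, ← mul_assoc,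
    jacobian, one_mul]

variable {n : ℕ}

@[fun_prop]
theorem measurable_vecCons_comp {α : Type*} [MeasurableSpace α] {u : α → ℝ} {v : α → Fin n → ℝ}
    (hu : Measurable u) (hv : Measurable v) : Measurable fun x => Matrix.vecCons (u x) (v x) :=
  measurable_pi_iff.2 <| Fin.cases hu fun i => (measurable_pi_apply i).comp hv

theorem lintegral_vecCons {f : (Fin (n + 1) → ℝ) → ℝ≥0∞} (hf : Measurable f) :
    ∫⁻ y, f y = ∫⁻ s : ℝ, ∫⁻ y, f (Matrix.vecCons s y) := by
  have split := (volume_preserving_piFinSuccAbove (fun _ : Fin (n + 1) => ℝ) 0).symm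
  calc ∫⁻ y, f y = ∫⁻ z : ℝ × (Fin n → ℝ), f (Matrix.vecCons z.1 z.2) := by
        simpa [MeasurableEquiv.piFinSuccAbove, Fin.consEquiv, Matrix.vecCons] using
          (split.lintegral_comp hf).symm
    _ = _ := by rw [Measure.volume_eq_prod, lintegral_prod _ (by fun_prop)]

theorem lintegral_prod_vecCons {f : (Fin (n + 1) → ℝ) × ℝ → ℝ≥0∞} (hf : Measurable f) :
    ∫⁻ y, f y = ∫⁻ s : ℝ, ∫⁻ y : (Fin n → ℝ) × ℝ, f (Matrix.vecCons s y.1, y.2) := by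
  rw [Measure.volume_eq_prod, lintegral_prod _ hf.aemeasurable, lintegral_vecCons (by fun_prop)]
  refine lintegral_congr fun s => ?_
  rw [Measure.volume_eq_prod, lintegral_prod _ (by fun_prop)]

/-- The integral of `g` against `|s|^k ds` over the line through the origin and the point
`(1, w, t)`, as a function of `(w, t)`. -/
def radialIntegral (k : ℕ) (g : (Fin (n + 1) → ℝ) × ℝ → ℝ≥0∞) (x : (Fin n → ℝ) × ℝ) : ℝ≥0∞ :=
  ∫⁻ s : ℝ, ‖s‖ₑ ^ k * g (Matrix.vecCons s (s • x.1), s * x.2)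

variable {g : (Fin (n + 1) → ℝ) × ℝ → ℝ≥0∞}

@[fun_prop]
theorem measurable_radialIntegral (hg : Measurable g) (k : ℕ) :
    Measurable (radialIntegral k g) := by
  unfold radialIntegral
  fun_prop

theorem lintegral_radialIntegral (hg : Measurable g) :
    ∫⁻ x, radialIntegral (n + 1) g x = ∫⁻ y, g y := by
  calc ∫⁻ x, radialIntegral (n + 1) g x
      = ∫⁻ s : ℝ, ∫⁻ x : (Fin n → ℝ) × ℝ,
          ‖s‖ₑ ^ (n + 1) * g (Matrix.vecCons s (s • x.1), s * x.2) :=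
        lintegral_lintegral_swap (by fun_prop)
    _ = ∫⁻ s : ℝ, ∫⁻ x : (Fin n → ℝ) × ℝ, g (Matrix.vecCons s x.1, x.2) := by
        refine lintegral_congr_ae ?_
        filter_upwards [Measure.ae_ne volume 0] with s hs
        rw [lintegral_const_mul _ (by fun_prop), lintegral_eq_enorm_pow_finrank_mul volume
          (fun x : (Fin n → ℝ) × ℝ => g (Matrix.vecCons s x.1, x.2)) hs]
        simp
    _ = ∫⁻ y, g y := (lintegral_prod_vecCons hg).symm

theorem hyperplaneIntegral_vecCons (hg : Measurable g) (s : ℝ) (a : Fin n → ℝ) :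
    hyperplaneIntegral g (Matrix.vecCons s a, 0) =
      hyperplaneIntegral (radialIntegral n g) (a, s) := by
  have dot_smul (t : ℝ) (w : Fin n → ℝ) :
      0 + Matrix.vecCons s a ⬝ᵥ Matrix.vecCons t (t • w) = t * (s + a ⬝ᵥ w) := by
    rw [Matrix.cons_dotProduct_cons, dotProduct_smul, smul_eq_mul]
    ring
  calc hyperplaneIntegral g (Matrix.vecCons s a, 0)
      = ∫⁻ t : ℝ, ∫⁻ y, g (Matrix.vecCons t y, 0 + Matrix.vecCons s a ⬝ᵥ Matrix.vecCons t y) :=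
        lintegral_vecCons (f := fun y => g (y, 0 + Matrix.vecCons s a ⬝ᵥ y)) (by fun_prop)
    _ = ∫⁻ t : ℝ, ∫⁻ w, ‖t‖ₑ ^ n * g (Matrix.vecCons t (t • w), t * (s + a ⬝ᵥ w)) := by
        refine lintegral_congr_ae ?_
        filter_upwards [Measure.ae_ne volume 0] with t ht
        rw [lintegral_eq_enorm_pow_finrank_mul volume _ ht, lintegral_const_mul _ (by fun_prop)]
        simp only [Module.finrank_fin_fun, dot_smul]
    _ = _ := lintegral_lintegral_swap (by fun_prop)

theorem lintegral_hyperplaneIntegral_pencil (hg : Measurable g) (N : ℕ) :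
    ∫⁻ a, hyperplaneIntegral g (a, 0) ^ N =
      ∫⁻ x, hyperplaneIntegral (radialIntegral n g) x ^ N := by
  rw [lintegral_vecCons (by fun_prop), Measure.volume_eq_prod, lintegral_prod_symm _ (by fun_prop)]
  simp only [hyperplaneIntegral_vecCons hg]

theorem lintegral_radialIntegral_indicator_rpow_le {G : Set ((Fin (n + 1) → ℝ) × ℝ)}
    (hG : MeasurableSet G) :
    ∫⁻ x, radialIntegral n (G.indicator 1) x ^ ((n + 2) / (n + 1) : ℝ) ≤ 8 * volume G := by
  have indicator_meas : Measurable (G.indicator (1 : (Fin (n + 1) → ℝ) × ℝ → ℝ≥0∞)) :=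
    measurable_one.indicator hG
  calc ∫⁻ x, radialIntegral n (G.indicator 1) x ^ ((n + 2) / (n + 1) : ℝ)
      ≤ ∫⁻ x, 8 * radialIntegral (n + 1) (G.indicator 1) x :=
        lintegral_mono fun x => lintegral_enorm_pow_mul_rpow_le
          (A := fun s => G.indicator 1 (Matrix.vecCons s (s • x.1), s * x.2)) (by fun_prop)
          (fun _ => Set.indicator_le_self' (fun _ _ => zero_le) _) n
    _ = 8 * volume G := by
        rw [lintegral_const_mul _ (by fun_prop), lintegral_radialIntegral indicator_meas,
          lintegral_indicator_one hG]

end RadialIntegral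

section Induction

variable {n : ℕ}

/-- The `L^{(n+2)/(n+1)} → L^{n+2}` bound for `hyperplaneIntegral`, with the constant `K` in its
`(n+2)`-th power form. -/
def HyperplaneBound (n : ℕ) (K : ℝ≥0∞) : Prop :=
  ∀ f : (Fin n → ℝ) × ℝ → ℝ≥0∞, Measurable f →
    ∫⁻ x, hyperplaneIntegral f x ^ (n + 2) ≤
      K * (∫⁻ x, f x ^ ((n + 2) / (n + 1) : ℝ)) ^ (n + 1)

theorem PencilBound.exists_hyperplaneBound {C : ℝ≥0∞} (hC : PencilBound n C) (hC_top : C ≠ ∞) :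
    ∃ K ≠ ∞, HyperplaneBound n K := by
  set A : ℝ≥0∞ := (2 ^ (n + 1) * C * (n + 1) ^ (n + 1)) ^ (1 / (n + 1) : ℝ)
  set p : ℝ := (n + 2) / (n + 1) with p_def
  have A_ne_top : A ≠ ∞ := rpow_ne_top_of_nonneg (by positivity) (by finiteness)
  have p_pos : 0 < p := by positivity
  have p_le : p ≤ n + 2 := div_le_self (by positivity) (by linarith)
  have exponent : (n + 2) / p = (n + 1 : ℕ) := by rw [p_def]; push_cast; field_simp
  refine ⟨ENNReal.ofReal (n + 2) * (ENNReal.ofReal p ^ ((n + 2) / p - 1) * A ^ (n + 1)), ?_,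
    fun f hf => ?_⟩
  · have : ENNReal.ofReal p ^ ((n + 2) / p - 1) ≠ ∞ :=
      rpow_ne_top_of_nonneg (by rw [exponent]; simp) ofReal_ne_top
    finiteness
  calc ∫⁻ x, hyperplaneIntegral f x ^ (n + 2)
      ≤ ENNReal.ofReal (n + 2) *
          lorentzLIntegral (n + 2) (n + 2) (hyperplaneIntegral f) volume := by
        exact_mod_cast lintegral_rpow_le_lorentzLIntegral (q := n + 2) (by positivity)
          (measurable_hyperplaneIntegral hf)
    _ ≤ ENNReal.ofReal (n + 2) * (ENNReal.ofReal p ^ ((n + 2) / p - 1) *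
          lorentzLIntegral (n + 2) p (hyperplaneIntegral f) volume ^ ((n + 2) / p)) := by
        gcongr
        exact lorentzLIntegral_le_of_exponent_le (by positivity) p_pos p_le
    _ ≤ ENNReal.ofReal (n + 2) * (ENNReal.ofReal p ^ ((n + 2) / p - 1) *
          (A * ∫⁻ x, f x ^ p) ^ ((n + 2) / p)) := by
        gcongr
        exact hC.lorentzLIntegral_hyperplaneIntegral_le hf
    _ = _ := by
        rw [exponent, rpow_natCast, mul_pow]
        ring

theorem HyperplaneBound.pencilBound_succ {K : ℝ≥0∞} (hK : HyperplaneBound n K) :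
    PencilBound (n + 1) (K * 8 ^ (n + 1)) := fun G hG => by
  have indicator_meas : Measurable (G.indicator (1 : (Fin (n + 1) → ℝ) × ℝ → ℝ≥0∞)) :=
    measurable_one.indicator hG
  calc ∫⁻ a, hyperplaneIntegral (G.indicator 1) (a, 0) ^ (n + 2)
      = ∫⁻ x, hyperplaneIntegral (radialIntegral n (G.indicator 1)) x ^ (n + 2) :=
        lintegral_hyperplaneIntegral_pencil indicator_meas _
    _ ≤ K * (∫⁻ x, radialIntegral n (G.indicator 1) x ^ ((n + 2) / (n + 1) : ℝ)) ^ (n + 1) :=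
        hK _ (measurable_radialIntegral indicator_meas n)
    _ ≤ K * (8 * volume G) ^ (n + 1) := by
        gcongr; exact lintegral_radialIntegral_indicator_rpow_le hG
    _ = _ := by rw [mul_pow, mul_assoc]

theorem exists_pencilBound (n : ℕ) : ∃ C ≠ ∞, PencilBound n C := by
  induction n with
  | zero => exact ⟨1, one_ne_top, pencilBound_zero⟩
  | succ n ih =>
    obtain ⟨C, hC_top, hC⟩ := ih
    obtain ⟨K, hK_top, hK⟩ := hC.exists_hyperplaneBound hC_top
    exact ⟨K * 8 ^ (n + 1), by finiteness, hK.pencilBound_succ⟩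

end Induction

section ParabolicShear

variable {n : ℕ}

/-- The shear `(y, z) ↦ (y, z - |y|²)`, which straightens translates of the paraboloid to
hyperplanes. -/
def parabolicShear (x : (Fin n → ℝ) × ℝ) : (Fin n → ℝ) × ℝ :=
  (x.1, x.2 - x.1 ⬝ᵥ x.1)

theorem measurePreserving_parabolicShear :
    MeasurePreserving (parabolicShear : (Fin n → ℝ) × ℝ → (Fin n → ℝ) × ℝ) :=
  (MeasurePreserving.id volume).skew_product (g := fun y z => z - y ⬝ᵥ y) (by fun_prop)
    (.of_forall fun y => (measurePreserving_sub_right volume (y ⬝ᵥ y)).map_eq)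

theorem measurePreserving_prodMap_toLp :
    MeasurePreserving (Prod.map (WithLp.toLp 2) id : (Fin n → ℝ) × ℝ → Pt n) :=
  (PiLp.volume_preserving_toLp (Fin n)).prod (MeasurePreserving.id volume)

theorem measurePreserving_prodMap_ofLp :
    MeasurePreserving (Prod.map WithLp.ofLp id : Pt n → (Fin n → ℝ) × ℝ) :=
  (PiLp.volume_preserving_ofLp (Fin n)).prod (MeasurePreserving.id volume)

theorem volume_preimage_smul_fst_le {c : ℝ} (hc : 1 ≤ |c|) {B : Set ((Fin n → ℝ) × ℝ)}
    (hB : MeasurableSet B) : volume (Prod.map (c • ·) id ⁻¹' B) ≤ volume B := by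
  have c_ne_zero : c ≠ 0 := abs_pos.1 (one_pos.trans_le hc)
  have jacobian_le : ENNReal.ofReal |(c ^ n)⁻¹| ≤ 1 := by
    rw [ofReal_le_one, abs_inv, abs_pow]
    exact inv_le_one_of_one_le₀ (one_le_pow₀ hc)
  calc volume (Prod.map (c • ·) id ⁻¹' B)
      = (volume.map (Prod.map (c • · : (Fin n → ℝ) → Fin n → ℝ) (id : ℝ → ℝ))) B :=
        (Measure.map_apply (by fun_prop) hB).symm
    _ = ENNReal.ofReal |(c ^ n)⁻¹| * volume B := by
        rw [Measure.volume_eq_prod, ← Measure.map_prod_map _ _ (by fun_prop) measurable_id,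
          Measure.map_addHaar_smul volume c_ne_zero, Measure.map_id, Measure.prod_smul_left,
          Module.finrank_fin_fun, Measure.smul_apply, smul_eq_mul]
    _ ≤ volume B := mul_le_of_le_one_left' jacobian_le

/-- The function on which `hyperplaneIntegral` takes the values that `radonT` takes on `f`. -/
def straighten (f : Pt n → ℝ≥0∞) : (Fin n → ℝ) × ℝ → ℝ≥0∞ :=
  f ∘ Prod.map (WithLp.toLp 2) id ∘ parabolicShear

variable {f : Pt n → ℝ≥0∞}

theorem measurePreserving_toLp_comp_parabolicShear :
    MeasurePreserving (Prod.map (WithLp.toLp 2) id ∘ parabolicShear : _ → Pt n) :=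
  measurePreserving_prodMap_toLp.comp measurePreserving_parabolicShear

theorem measurable_straighten (hf : Measurable f) : Measurable (straighten f) :=
  hf.comp measurePreserving_toLp_comp_parabolicShear.measurable

theorem lintegral_straighten_rpow (hf : Measurable f) (p : ℝ) :
    ∫⁻ y, straighten f y ^ p = ∫⁻ x, f x ^ p :=
  measurePreserving_toLp_comp_parabolicShear.lintegral_comp (hf.pow_const p)

theorem radonT_eq_hyperplaneIntegral (hf : Measurable f) (x : Pt n) :
    radonT n f x = hyperplaneIntegral (straighten f)
      (Prod.map ((2 : ℝ) • ·) id (parabolicShear (x.1.ofLp, x.2))) := by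
  have norm_sq (v : Vec n) : ‖v‖ ^ 2 = v.ofLp ⬝ᵥ v.ofLp := by
    simp [PiLp.norm_sq_eq_of_L2, dotProduct, ← sq]
  calc radonT n f x = ∫⁻ y : Vec n, f (y, x.2 - ‖x.1 - y‖ ^ 2) := by
        simpa [radonT] using
          (lintegral_sub_left_eq_self (fun t => f (x.1 - t, x.2 - ‖t‖ ^ 2)) x.1).symm
    _ = ∫⁻ y : Fin n → ℝ, f (WithLp.toLp 2 y, x.2 - ‖x.1 - WithLp.toLp 2 y‖ ^ 2) :=
        ((PiLp.volume_preserving_toLp (Fin n)).lintegral_comp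
          (f := fun y : Vec n => f (y, x.2 - ‖x.1 - y‖ ^ 2)) (by fun_prop)).symm
    _ = _ := by
        refine lintegral_congr fun y => congrArg f (Prod.ext rfl ?_)
        simp only [norm_sq, WithLp.ofLp_sub, parabolicShear, Prod.map_snd, Prod.map_fst, id,
          Function.comp_apply, sub_dotProduct, dotProduct_sub, smul_dotProduct, dotProduct_comm y,
          smul_eq_mul]
        ring

theorem volume_lt_radonT_le (hf : Measurable f) (l : ℝ≥0∞) :
    volume {x | l < radonT n f x} ≤ volume {x | l < hyperplaneIntegral (straighten f) x} := by
  set B := {x | l < hyperplaneIntegral (straighten f) x}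
  have B_meas : MeasurableSet B :=
    measurableSet_lt measurable_const (measurable_hyperplaneIntegral (measurable_straighten hf))
  have shear_ofLp : MeasurePreserving (parabolicShear ∘ Prod.map WithLp.ofLp id : Pt n → _) :=
    measurePreserving_parabolicShear.comp measurePreserving_prodMap_ofLp
  have dilate_meas : Measurable
      (Prod.map ((2 : ℝ) • ·) id : (Fin n → ℝ) × ℝ → (Fin n → ℝ) × ℝ) := by fun_prop
  calc volume {x | l < radonT n f x}
      = volume ((parabolicShear ∘ Prod.map WithLp.ofLp id : Pt n → _) ⁻¹'
          (Prod.map ((2 : ℝ) • ·) id ⁻¹' B)) := by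
        simp only [radonT_eq_hyperplaneIntegral hf]
        rfl
    _ = volume (Prod.map ((2 : ℝ) • ·) id ⁻¹' B) :=
        shear_ofLp.measure_preimage (dilate_meas B_meas).nullMeasurableSet
    _ ≤ volume B := volume_preimage_smul_fst_le (by norm_num) B_meas

theorem exists_lorentzLIntegral_radonT_le (n : ℕ) :
    ∃ C ≠ ∞, ∀ f : Pt n → ℝ≥0∞, Measurable f →
      lorentzLIntegral (n + 2) ((n + 2) / (n + 1)) (radonT n f) volume ≤
        C * ∫⁻ x, f x ^ ((n + 2) / (n + 1) : ℝ) := by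
  obtain ⟨C, hC_top, hC⟩ := exists_pencilBound n
  refine ⟨(2 ^ (n + 1) * C * (n + 1) ^ (n + 1)) ^ (1 / (n + 1) : ℝ),
    rpow_ne_top_of_nonneg (by positivity) (by finiteness), fun f hf => ?_⟩
  calc lorentzLIntegral (n + 2) ((n + 2) / (n + 1)) (radonT n f) volume
      ≤ lorentzLIntegral (n + 2) ((n + 2) / (n + 1)) (hyperplaneIntegral (straighten f)) volume :=
        lorentzLIntegral_mono_measure_lt (by positivity) (by positivity)
          fun _ => volume_lt_radonT_le hf _
    _ ≤ _ := hC.lorentzLIntegral_hyperplaneIntegral_le (measurable_straighten hf)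
    _ = _ := by rw [lintegral_straighten_rpow hf]

theorem exists_lorentzLIntegral_radonT_rpow_le_mul_LpN (n : ℕ) {r : ℝ}
    (hr : (n + 2) / (n + 1) ≤ r) :
    ∃ C : ℝ, 0 < C ∧ ∀ f : Pt n → ℝ≥0∞, Measurable f →
      lorentzLIntegral (n + 2) r (radonT n f) volume ^ (1 / r) ≤
        ENNReal.ofReal C * LpN n ((n + 2) / (n + 1)) f := by
  obtain ⟨C, hC_top, hC⟩ := exists_lorentzLIntegral_radonT_le n
  set p : ℝ := (n + 2) / (n + 1)
  have p_pos : 0 < p := by positivity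
  have r_pos : 0 < r := p_pos.trans_le hr
  set K : ℝ≥0∞ := (ENNReal.ofReal p ^ (r / p - 1) * C ^ (r / p)) ^ (1 / r)
  have K_ne_top : K ≠ ∞ := by
    have : 0 ≤ r / p - 1 := sub_nonneg.2 ((one_le_div p_pos).2 hr)
    exact rpow_ne_top_of_nonneg (by positivity) <| mul_ne_top
      (rpow_ne_top_of_nonneg this ofReal_ne_top) (rpow_ne_top_of_nonneg (by positivity) hC_top)
  refine ⟨K.toReal + 1, by positivity, fun f hf => ?_⟩
  calc lorentzLIntegral (n + 2) r (radonT n f) volume ^ (1 / r)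
      ≤ (ENNReal.ofReal p ^ (r / p - 1) * (C * ∫⁻ x, f x ^ p) ^ (r / p)) ^ (1 / r) := by
        gcongr
        exact (lorentzLIntegral_le_of_exponent_le (by positivity) p_pos hr).trans
          (by gcongr; exact hC f hf)
    _ = K * LpN n p f := by
        have exponent : r / p * (1 / r) = 1 / p := by field_simp
        rw [mul_rpow_of_nonneg C _ (by positivity), ← mul_assoc,
          mul_rpow_of_nonneg _ _ (by positivity), ← rpow_mul, exponent, LpN]
    _ ≤ ENNReal.ofReal (K.toReal + 1) * LpN n p f := by
        gcongr
        exact (le_ofReal_iff_toReal_le K_ne_top (by positivity)).2 (by linarith)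

end ParabolicShear

theorem stmt7_general (d : ℕ) (hd : 0 < d) (r : ℝ) (hr : ((d : ℝ) + 1) / d ≤ r) :
    ∃ C : ℝ, 0 < C ∧ ∀ f : Pt (d - 1) → ℝ≥0∞, Measurable f →
      lorentzLIntegral (d + 1) r (radonT (d - 1) f) volume ^ (1 / r) ≤
        ENNReal.ofReal C * LpN (d - 1) (((d : ℝ) + 1) / d) f := by
  obtain ⟨n, rfl⟩ : ∃ n, d = n + 1 := ⟨d - 1, by omega⟩
  have p_eq : (((n + 1 : ℕ) : ℝ) + 1) / (n + 1 : ℕ) = (n + 2) / (n + 1) := by push_cast; ring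
  have q_eq : ((n + 1 : ℕ) : ℝ) + 1 = n + 2 := by push_cast; ring
  rw [p_eq] at hr ⊢
  rw [q_eq]
  exact exists_lorentzLIntegral_radonT_rpow_le_mul_LpN n hr

/-- `T` maps `L^{(d+1)/d}` boundedly into the Lorentz space
`L^{d+1, r}` for every `r > (d+1)/d`, the Lorentz quasinorm being
`(∫_0^∞ (λ |{Tf > λ}|^{1/(d+1)})^r dλ/λ)^{1/r}`. -/
theorem stmt7 (d : ℕ) (hd : 2 ≤ d) (r : ℝ) (hr : ((d : ℝ) + 1) / d < r) :
    ∃ C : ℝ, 0 < C ∧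
      ∀ (f : Pt (d - 1) → ℝ≥0∞), Measurable f →
        LpN (d - 1) (((d : ℝ) + 1) / d) f < ⊤ →
        (∫⁻ lam in Set.Ioi (0 : ℝ),
            (ENNReal.ofReal lam *
                volume {x : Pt (d - 1) | ENNReal.ofReal lam < radonT (d - 1) f x} ^
                  ((1 : ℝ) / (d + 1))) ^ r / ENNReal.ofReal lam) ^ (1 / r) ≤
          ENNReal.ofReal C * LpN (d - 1) (((d : ℝ) + 1) / d) f := by
  obtain ⟨C, hC, bound⟩ := stmt7_general d (by omega) r hr.le
  exact ⟨C, hC, fun f hf _ => bound f hf⟩
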